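/- Let {θ_m*}_{m≥1} be a sequence of real numbers with 0 < θ_m* < 1 for all m and lim_{m→∞} m·θ_m* = 0. Then there exists M ∈ ℕ such that for all integers m ≥ M, the derivative J_ν′(z;q²) has constant sign on the open interval ]q^{−m+θ_m*}, q^{−m}[; that is, for all z₁, z₂ in that interval, J_ν′(z₁;q²) · J_ν′(z₂;q²) > 0. -/

import Mathlib

/-!
Put `p = q²`, `a = q^{2(ν+1)}` and `w_k = 1 / ((a;p)_k (p;p)_k)`. Termwise differentiation gives
`J_ν'(z) = c z^{ν-1} F(z²)` with `c ≠ 0` and `F(x) = ∑ (ν + 2k) (-1)^k p^{k(k+1)/2} w_k x^k`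
(`deriv_qBessel`). At `x = p^{-m+t}` with `0 < t < θ m`, the substitution `k = m + j` turns `F(x)` into
`(-1)^m` times a positive factor times
`∑_{j ≥ -m} (-1)^j p^{j(j+1)/2} (ν + 2m + 2j) p^{jt} w_{m+j}` (`recentred_eq`).

The weights tend to a limit `W > 0` at the geometric rate `p^k` (`wt_limit`), and
`∑_{j ∈ ℤ} (-1)^j p^{j(j+1)/2} = 0` by the symmetry `j ↦ -1 - j`. Subtracting `(ν + 2m) W` times this
vanishing series, and using `m t → 0` and `m p^m → 0`, dominated convergence shows that the recentred
sum tends to `W ∑_{j ∈ ℤ} (-1)^j 2j p^{j(j+1)/2}` (`tendsto_recentred`).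

This theta constant is positive (`thetaConst_pos`). Indeed, the same limit applied to Euler's series
`E(x) = ∑ (-1)^k p^{k(k+1)/2} x^k / (p;p)_k` at `x = p^{-m}` can be computed exactly from
`E(x) = (1 - px) E(px)`: the recentred sum equals `2 (p;p)_{m-1} E(1)`, and `E(1) > 0`. Hence `F` has the
sign `(-1)^m` on the whole interval once `m` is large.
-/

open Filter

/-- The finite q-shifted factorial `(a;q)_n`. -/
noncomputable def qPoch (a q : ℝ) : ℕ → ℝ := fun n => ∏ j ∈ Finset.range n, (1 - a * q ^ j)

/-- The infinite q-shifted factorial `(a;q)_∞`. -/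
noncomputable def qPochInf (a q : ℝ) : ℝ := ∏' j : ℕ, (1 - a * q ^ j)

/-- The third Jackson (Hahn–Exton) q-Bessel function `J_ν(z;q²)` (base `q²`). -/
noncomputable def qBessel (ν q z : ℝ) : ℝ :=
  z ^ ν * (qPochInf (q ^ (2 * (ν + 1))) (q ^ 2) / qPochInf (q ^ 2) (q ^ 2)) *
    ∑' k : ℕ, ((-1 : ℝ) ^ k * q ^ (k * (k + 1)) * z ^ (2 * k) /
      (qPoch (q ^ (2 * (ν + 1))) (q ^ 2) k * qPoch (q ^ 2) (q ^ 2) k))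


/-! ### The weights `1 / ((a;p)_k (p;p)_k)` -/

theorem qPoch_pos {a p : ℝ} (ha0 : 0 ≤ a) (ha1 : a < 1) (hp0 : 0 < p) (hp1 : p < 1) (k : ℕ) :
    0 < qPoch a p k := by
  refine Finset.prod_pos fun j _ => ?_
  have h1 : p ^ j ≤ 1 := pow_le_one₀ hp0.le hp1.le
  have h2 : 0 < p ^ j := by positivity
  nlinarith

theorem summable_norm_qPoch {a p : ℝ} (hp0 : 0 < p) (hp1 : p < 1) :
    Summable fun j : ℕ => ‖-(a * p ^ j)‖ := by
  have := ((summable_geometric_of_lt_one hp0.le hp1).mul_left a).norm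
  simpa using this

theorem qPochInf_ne_zero {a p : ℝ} (ha0 : 0 ≤ a) (ha1 : a < 1) (hp0 : 0 < p) (hp1 : p < 1) :
    qPochInf a p ≠ 0 := by
  have h := tprod_one_add_ne_zero_of_summable (f := fun j : ℕ => -(a * p ^ j)) (fun j => by
    have h1 : p ^ j ≤ 1 := pow_le_one₀ hp0.le hp1.le
    have h2 : 0 < p ^ j := by positivity
    have : 0 < 1 + -(a * p ^ j) := by nlinarith
    exact this.ne') (summable_norm_qPoch hp0 hp1)
  simpa [qPochInf, sub_eq_add_neg] using h

theorem qPoch_tendsto {a p : ℝ} (hp0 : 0 < p) (hp1 : p < 1) :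
    Tendsto (qPoch a p) atTop (nhds (qPochInf a p)) := by
  have h := (multipliable_one_add_of_summable (f := fun j : ℕ => -(a * p ^ j))
    (summable_norm_qPoch hp0 hp1)).tendsto_prod_tprod_nat
  unfold qPoch qPochInf
  simpa only [sub_eq_add_neg] using h

theorem qPoch_succ (a p : ℝ) (k : ℕ) : qPoch a p (k + 1) = qPoch a p k * (1 - a * p ^ k) :=
  Finset.prod_range_succ _ _

/-- The weight `1 / ((a;p)_k (p;p)_k)` of the `k`-th term of the series. -/
noncomputable def wt (a p : ℝ) (k : ℕ) : ℝ := 1 / (qPoch a p k * qPoch p p k)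

theorem wt_pos {a p : ℝ} (ha0 : 0 ≤ a) (ha1 : a < 1) (hp0 : 0 < p) (hp1 : p < 1) (k : ℕ) :
    0 < wt a p k := by
  have := qPoch_pos ha0 ha1 hp0 hp1 k
  have := qPoch_pos hp0.le hp1 hp0 hp1 k
  unfold wt; positivity

theorem wt_rec {a p : ℝ} (ha0 : 0 ≤ a) (ha1 : a < 1) (hp0 : 0 < p) (hp1 : p < 1) (k : ℕ) :
    wt a p k = wt a p (k + 1) * ((1 - a * p ^ k) * (1 - p ^ (k + 1))) := by
  have h1 := (qPoch_pos ha0 ha1 hp0 hp1 k).ne'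
  have h2 := (qPoch_pos hp0.le hp1 hp0 hp1 k).ne'
  have h3 := (qPoch_pos ha0 ha1 hp0 hp1 (k + 1)).ne'
  have h4 := (qPoch_pos hp0.le hp1 hp0 hp1 (k + 1)).ne'
  unfold wt
  have e : p ^ (k + 1) = p * p ^ k := pow_succ' _ _
  rw [qPoch_succ] at h3 h4 ⊢
  rw [qPoch_succ p p k, e]
  have h5 := right_ne_zero_of_mul h3
  have h6 := right_ne_zero_of_mul h4
  generalize 1 - p * p ^ k = y at *
  field_simp

/-- The weights converge geometrically fast to a positive limit. -/
theorem wt_limit {a p : ℝ} (ha0 : 0 ≤ a) (ha1 : a < 1) (hp0 : 0 < p) (hp1 : p < 1) :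
    ∃ W C : ℝ, 0 < W ∧ ∀ k, |wt a p k - W| ≤ C * p ^ k := by
  have nn : ∀ b, 0 ≤ b → b < 1 → 0 < qPochInf b p := fun b h0 h1 =>
    lt_of_le_of_ne (ge_of_tendsto' (qPoch_tendsto hp0 hp1) fun k => (qPoch_pos h0 h1 hp0 hp1 k).le)
      (qPochInf_ne_zero h0 h1 hp0 hp1).symm
  have hA := nn a ha0 ha1
  have hP := nn p hp0.le hp1
  have hlim : Tendsto (wt a p) atTop (nhds (1 / (qPochInf a p * qPochInf p p))) :=
    tendsto_const_nhds.div ((qPoch_tendsto hp0 hp1).mul (qPoch_tendsto hp0 hp1)) (by positivity)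
  obtain ⟨B, hB⟩ := hlim.bddAbove_range
  have hB' : ∀ k, wt a p k ≤ B := fun k => hB ⟨k, rfl⟩
  refine ⟨1 / (qPochInf a p * qPochInf p p), 2 * B / (1 - p), by positivity, fun k => ?_⟩
  have := dist_le_of_le_geometric_of_tendsto p (2 * B) hp1 (fun n => ?_) hlim k
  · rw [Real.dist_eq] at this
    convert this using 1
    ring
  · rw [Real.dist_eq, wt_rec ha0 ha1 hp0 hp1 n, pow_succ]
    have h0 := wt_pos ha0 ha1 hp0 hp1 (n + 1)
    have h1 := hB' (n + 1)
    have h2 : 0 < p ^ n := by positivity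
    have h3 : p ^ n ≤ 1 := pow_le_one₀ hp0.le hp1.le
    generalize wt a p (n + 1) = w at *
    generalize p ^ n = r at *
    have h4 : 0 ≤ 1 - (1 - a * r) * (1 - r * p) := by
      have : a * r ≤ 1 := by nlinarith
      have : r * p ≤ 1 := by nlinarith
      have : 0 ≤ a * r := by positivity
      have : 0 ≤ r * p := by positivity
      nlinarith
    have h5 : 1 - (1 - a * r) * (1 - r * p) ≤ 2 * r := by
      have : a * r ≤ r := by nlinarith
      have : r * p ≤ r := by nlinarith
      have : 0 ≤ a * r * (r * p) := by positivity
      nlinarith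
    rw [abs_sub_comm, show w - w * ((1 - a * r) * (1 - r * p)) =
      w * (1 - (1 - a * r) * (1 - r * p)) by ring, abs_of_nonneg (by positivity)]
    calc _ ≤ B * (2 * r) := mul_le_mul h1 h5 h4 (h0.le.trans h1)
      _ = _ := by ring

/-! ### Summability of Gaussian-type series -/

theorem gauss_rpow {p : ℝ} (hp0 : 0 < p) (k : ℕ) :
    p ^ ((k : ℝ) * (k + 1) / 2) = (p ^ (1 / 2 : ℝ) * (p ^ (1 / 2 : ℝ)) ^ k) ^ k := by
  rw [← pow_succ', ← pow_mul, ← Real.rpow_natCast, ← Real.rpow_mul hp0.le]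
  congr 1
  push_cast
  ring

theorem summable_gauss {p : ℝ} (hp0 : 0 < p) (hp1 : p < 1) (R : ℝ) (hR : 0 ≤ R) :
    Summable fun k : ℕ => ((k : ℝ) + 1) * p ^ ((k : ℝ) * (k + 1) / 2) * R ^ k := by
  set s : ℝ := p ^ (1 / 2 : ℝ) with hs
  have hs0 : 0 < s := by positivity
  have hs1 : s < 1 := Real.rpow_lt_one hp0.le hp1 (by norm_num)
  have hlim : Tendsto (fun k : ℕ => s * s ^ k * R) atTop (nhds 0) := by
    simpa using ((tendsto_pow_atTop_nhds_zero_of_lt_one hs0.le hs1).const_mul s).mul_const R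
  have hsum : Summable fun k : ℕ => ((k : ℝ) + 1) * (1 / 2 : ℝ) ^ k := by
    have h1 := summable_pow_mul_geometric_of_norm_lt_one 1 (r := (1 / 2 : ℝ)) (by norm_num)
    have h2 := summable_geometric_of_lt_one (r := (1 / 2 : ℝ)) (by norm_num) (by norm_num)
    refine (h1.add h2).congr fun k => ?_
    ring
  refine Summable.of_norm_bounded_eventually_nat hsum ?_
  filter_upwards [hlim.eventually (gt_mem_nhds (show (0 : ℝ) < 1 / 2 by norm_num))] with k hk
  rw [Real.norm_of_nonneg (by positivity), gauss_rpow hp0, mul_assoc, ← mul_pow]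
  gcongr

/-- Summability of the majorant used for dominated convergence in `tendsto_recentred`. -/
theorem summable_gauss_int {p : ℝ} (hp0 : 0 < p) (hp1 : p < 1) :
    Summable fun j : ℤ => (1 + |(j : ℝ)|) * (p ^ ((j : ℝ) * (j + 1) / 2) * p ^ (-|(j : ℝ)|)) := by
  apply Summable.of_nat_of_neg
  · refine (summable_gauss hp0 hp1 p⁻¹ (by positivity)).congr fun k => ?_
    simp only [Int.cast_natCast, Nat.abs_cast]
    rw [Real.rpow_neg hp0.le, Real.rpow_natCast, inv_pow]
    ring
  · refine (summable_gauss hp0 hp1 (p⁻¹ ^ 2) (by positivity)).congr fun k => ?_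
    simp only [Int.cast_neg, Int.cast_natCast, abs_neg, Nat.abs_cast]
    rw [← pow_mul, inv_pow, ← Real.rpow_natCast, ← Real.rpow_neg hp0.le, mul_assoc,
      ← Real.rpow_add hp0, ← Real.rpow_add hp0]
    push_cast
    ring_nf

/-! ### The rescaled derivative series and its limit -/

/-- A sequence on `ℕ` extended by zero to `ℤ`. -/
noncomputable def extZ (w : ℕ → ℝ) (n : ℤ) : ℝ := if 0 ≤ n then w n.toNat else 0

/-- The Gaussian coefficient `(-1)^j p^{j(j+1)/2}`. -/
noncomputable def gcoef (p : ℝ) (j : ℤ) : ℝ := (-1 : ℝ) ^ j * p ^ ((j : ℝ) * (j + 1) / 2)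

/-- The series `∑ (ν + 2k) (-1)^k p^{k(k+1)/2} w_k x^k` at `x = p^{-m+t}`, recentred at its dominant
index via `k = m + j` and divided by `(-1)^m p^{-m(m-1)/2 + mt}`. -/
noncomputable def recentred (ν p : ℝ) (w : ℕ → ℝ) (m : ℕ) (t : ℝ) : ℝ :=
  ∑' j : ℤ, gcoef p j * ((ν + 2 * m + 2 * j) * p ^ ((j : ℝ) * t) * extZ w (m + j))

/-- The theta constant `∑_{j ∈ ℤ} (-1)^j 2j p^{j(j+1)/2}`. -/
noncomputable def thetaConst (p : ℝ) : ℝ := ∑' j : ℤ, gcoef p j * (2 * j)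

theorem abs_gcoef {p : ℝ} (hp0 : 0 < p) (j : ℤ) :
    |gcoef p j| = p ^ ((j : ℝ) * (j + 1) / 2) := by
  rw [gcoef, abs_mul, abs_zpow, abs_neg, abs_one, one_zpow, one_mul, abs_of_pos (by positivity)]

theorem one_le_rpow_neg_abs {p : ℝ} (hp0 : 0 < p) (hp1 : p < 1) (x : ℝ) : 1 ≤ p ^ (-|x|) :=
  Real.one_le_rpow_of_pos_of_le_one_of_nonpos hp0 hp1.le (by simp)

theorem summable_gcoef {p : ℝ} (hp0 : 0 < p) (hp1 : p < 1) : Summable (gcoef p) := by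
  refine Summable.of_norm_bounded (summable_gauss_int hp0 hp1) fun j => ?_
  rw [Real.norm_eq_abs, abs_gcoef hp0]
  have h1 := one_le_rpow_neg_abs hp0 hp1 j
  have h2 : (0 : ℝ) < p ^ ((j : ℝ) * (j + 1) / 2) := by positivity
  have h3 := abs_nonneg (j : ℝ)
  calc _ = 1 * (p ^ ((j : ℝ) * (j + 1) / 2) * 1) := by ring
    _ ≤ _ := by gcongr; linarith

/-- The reflection `j ↦ -1 - j` changes the sign of every coefficient. -/
theorem tsum_gcoef (p : ℝ) : ∑' j : ℤ, gcoef p j = 0 := by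
  have h : ∀ j : ℤ, gcoef p (-1 - j) = -gcoef p j := fun j => by
    unfold gcoef
    have e : ((-1 : ℝ)) ^ (-1 - j) = -(-1) ^ j := by
      rw [zpow_sub₀ (by norm_num)]
      rcases Int.even_or_odd j with h | h
      · simp [h.neg_one_zpow]
      · simp [h.neg_one_zpow]
    rw [e, neg_mul]
    congr 3
    push_cast
    ring
  have h2 := (Equiv.subLeft (-1 : ℤ)).tsum_eq (gcoef p)
  simp only [Equiv.subLeft_apply, h, tsum_neg] at h2
  linarith

theorem abs_extZ_sub_le {p : ℝ} (hp0 : 0 < p) (hp1 : p < 1) {w : ℕ → ℝ} {W C : ℝ}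
    (hw : ∀ k, |w k - W| ≤ C * p ^ k) (n : ℤ) : |extZ w n - W| ≤ (C + |W|) * p ^ (n : ℝ) := by
  have hpos : 0 < p ^ (n : ℝ) := by positivity
  unfold extZ
  split_ifs with h
  · obtain ⟨k, rfl⟩ := Int.eq_ofNat_of_zero_le h
    have := hw k
    simp only [Int.toNat_natCast, Int.cast_natCast, Real.rpow_natCast] at *
    have : 0 ≤ |W| * p ^ k := by positivity
    linarith
  · have hC : 0 ≤ C := by simpa using (abs_nonneg _).trans (hw 0)
    have h1 : 1 ≤ p ^ (n : ℝ) := Real.one_le_rpow_of_pos_of_le_one_of_nonpos hp0 hp1.le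
      (by exact_mod_cast (not_le.1 h).le)
    rw [zero_sub, abs_neg]
    nlinarith [abs_nonneg W]

theorem abs_extZ_le {p : ℝ} (hp0 : 0 < p) (hp1 : p < 1) {w : ℕ → ℝ} {W C : ℝ}
    (hw : ∀ k, |w k - W| ≤ C * p ^ k) (n : ℤ) : |extZ w n| ≤ C + |W| := by
  have hC : 0 ≤ C := by simpa using (abs_nonneg _).trans (hw 0)
  unfold extZ
  split_ifs with h
  · have h1 := hw n.toNat
    have h2 : p ^ n.toNat ≤ 1 := pow_le_one₀ hp0.le hp1.le
    have h3 := abs_sub_abs_le_abs_sub (w n.toNat) W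
    nlinarith
  · rw [abs_zero]; positivity

theorem abs_exp_sub_one_le_mul (u : ℝ) : |Real.exp u - 1| ≤ |u| * Real.exp |u| := by
  have h1 := Real.add_one_le_exp u
  have h2 := Real.add_one_le_exp (-u)
  have h3 : Real.exp (-u) * Real.exp u = 1 := by rw [← Real.exp_add]; simp
  have h4 := Real.exp_pos u
  have h5 := Real.one_le_exp (abs_nonneg u)
  have h6 : Real.exp u ≤ Real.exp |u| := Real.exp_le_exp.2 (le_abs_self u)
  have h7 : u * Real.exp u ≤ |u| * Real.exp |u| :=
    mul_le_mul (le_abs_self u) h6 h4.le (abs_nonneg u)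
  rw [abs_le]
  constructor
  · nlinarith [neg_abs_le u, abs_nonneg u]
  · nlinarith

theorem rpow_mul_le {p : ℝ} (hp0 : 0 < p) (hp1 : p < 1) {t : ℝ} (ht0 : 0 ≤ t) (ht1 : t ≤ 1)
    (x : ℝ) : p ^ (x * t) ≤ p ^ (-|x|) := by
  apply Real.rpow_le_rpow_of_exponent_ge hp0 hp1.le
  nlinarith [neg_abs_le x, abs_nonneg x]

theorem abs_rpow_mul_sub_one_le {p : ℝ} (hp0 : 0 < p) (hp1 : p < 1) {t : ℝ} (ht0 : 0 ≤ t)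
    (ht1 : t ≤ 1) (x : ℝ) :
    |p ^ (x * t) - 1| ≤ |x| * t * |Real.log p| * p ^ (-|x|) := by
  have h := abs_exp_sub_one_le_mul (Real.log p * (x * t))
  rw [← Real.rpow_def_of_pos hp0] at h
  have hl : Real.log p < 0 := Real.log_neg hp0 hp1
  have e : |Real.log p * (x * t)| = |x| * t * |Real.log p| := by
    rw [abs_mul, abs_mul, abs_of_nonneg ht0]; ring
  rw [e] at h
  refine h.trans ?_
  have e2 : Real.exp (|x| * t * |Real.log p|) = p ^ ((-|x|) * t) := by
    rw [Real.rpow_def_of_pos hp0, abs_of_neg hl]; congr 1; ring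
  rw [e2]
  have := rpow_mul_le hp0 hp1 ht0 ht1 (-|x|)
  rw [abs_neg, abs_abs] at this
  gcongr

/-- The summand of `recentred` after subtraction of the multiple `(ν + 2m) W` of the vanishing
theta series. -/
noncomputable def corrTerm (ν p : ℝ) (w : ℕ → ℝ) (W : ℝ) (m : ℕ) (t : ℝ) (j : ℤ) : ℝ :=
  (ν + 2 * m + 2 * j) * p ^ ((j : ℝ) * t) * extZ w (m + j) - (ν + 2 * m) * W

theorem corrTerm_eq (ν p : ℝ) (w : ℕ → ℝ) (W : ℝ) (m : ℕ) (t : ℝ) (j : ℤ) :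
    corrTerm ν p w W m t j = 2 * j * p ^ ((j : ℝ) * t) * extZ w (m + j)
      + (ν + 2 * m) * (p ^ ((j : ℝ) * t) - 1) * extZ w (m + j)
      + (ν + 2 * m) * (extZ w (m + j) - W) := by
  unfold corrTerm; ring

theorem abs_mid_le {p : ℝ} (hp0 : 0 < p) (hp1 : p < 1) {w : ℕ → ℝ} {W C : ℝ}
    (hw : ∀ k, |w k - W| ≤ C * p ^ k) (ν : ℝ) (m : ℕ) {t : ℝ} (ht0 : 0 ≤ t) (ht1 : t ≤ 1) (j : ℤ) :
    |(ν + 2 * m) * (p ^ ((j : ℝ) * t) - 1) * extZ w (m + j)| ≤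
      ((|ν| + 2 * m) * t) * (|(j : ℝ)| * |Real.log p| * p ^ (-|(j : ℝ)|) * (C + |W|)) := by
  have h1 := abs_rpow_mul_sub_one_le hp0 hp1 ht0 ht1 j
  have h2 := abs_extZ_le hp0 hp1 hw (m + j)
  have h3 : |ν + 2 * (m : ℝ)| ≤ |ν| + 2 * m := by
    simpa using abs_add_le ν (2 * (m : ℝ))
  rw [abs_mul, abs_mul]
  calc _ ≤ (|ν| + 2 * m) * (|(j : ℝ)| * t * |Real.log p| * p ^ (-|(j : ℝ)|)) * (C + |W|) := by
        gcongr
    _ = _ := by ring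

theorem abs_last_le {p : ℝ} (hp0 : 0 < p) (hp1 : p < 1) {w : ℕ → ℝ} {W C : ℝ}
    (hw : ∀ k, |w k - W| ≤ C * p ^ k) (ν : ℝ) (m : ℕ) (j : ℤ) :
    |(ν + 2 * m) * (extZ w (m + j) - W)| ≤
      ((|ν| + 2 * m) * p ^ m) * ((C + |W|) * p ^ (-|(j : ℝ)|)) := by
  have hC : 0 ≤ C := by simpa using (abs_nonneg _).trans (hw 0)
  have h2 := abs_extZ_sub_le hp0 hp1 hw (m + j)
  have h3 : |ν + 2 * (m : ℝ)| ≤ |ν| + 2 * m := by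
    simpa using abs_add_le ν (2 * (m : ℝ))
  have h4 : p ^ (((m + j : ℤ)) : ℝ) ≤ p ^ m * p ^ (-|(j : ℝ)|) := by
    push_cast
    rw [Real.rpow_add hp0, Real.rpow_natCast]
    have := Real.rpow_le_rpow_of_exponent_ge hp0 hp1.le (neg_abs_le (j : ℝ))
    exact mul_le_mul_of_nonneg_left this (by positivity)
  rw [abs_mul]
  calc _ ≤ (|ν| + 2 * m) * ((C + |W|) * (p ^ m * p ^ (-|(j : ℝ)|))) := by
        gcongr
        exact h2.trans (by gcongr)
    _ = _ := by ring

/-- Since `∑ (-1)^j p^{j(j+1)/2} = 0`, the divergent factor `ν + 2m` drops out and dominated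
convergence applies to the remaining sum over `j`. -/
theorem tendsto_recentred {p : ℝ} (hp0 : 0 < p) (hp1 : p < 1) {w : ℕ → ℝ} {W C : ℝ}
    (hw : ∀ k, |w k - W| ≤ C * p ^ k) (ν : ℝ) {τ : ℕ → ℝ} (hτ0 : ∀ m, 0 ≤ τ m)
    (hτ1 : ∀ m, τ m ≤ 1) (hτ : Tendsto (fun m : ℕ => (m : ℝ) * τ m) atTop (nhds 0)) :
    Tendsto (fun m => recentred ν p w m (τ m)) atTop (nhds (W * thetaConst p)) := by
  have hC : 0 ≤ C := by simpa using (abs_nonneg _).trans (hw 0)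
  have hpm : Tendsto (fun m : ℕ => p ^ m) atTop (nhds 0) :=
    tendsto_pow_atTop_nhds_zero_of_lt_one hp0.le hp1
  have hτz : Tendsto τ atTop (nhds 0) := by
    refine squeeze_zero' (Eventually.of_forall hτ0) ?_ hτ
    filter_upwards [eventually_ge_atTop 1] with m hm
    have : (1 : ℝ) ≤ m := by exact_mod_cast hm
    nlinarith [hτ0 m]
  have lim1 : Tendsto (fun m : ℕ => (|ν| + 2 * (m : ℝ)) * τ m) atTop (nhds 0) := by
    have := (hτz.const_mul |ν|).add (hτ.const_mul 2)
    simp only [mul_zero, add_zero] at this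
    exact this.congr fun m => by ring
  have lim2 : Tendsto (fun m : ℕ => (|ν| + 2 * (m : ℝ)) * p ^ m) atTop (nhds 0) := by
    have := (hpm.const_mul |ν|).add
      ((tendsto_self_mul_const_pow_of_lt_one hp0.le hp1).const_mul 2)
    simp only [mul_zero, add_zero] at this
    exact this.congr fun m => by ring
  set B := C + |W| with hB
  have hB0 : 0 ≤ B := by positivity
  set L := |Real.log p|
  set K := 2 * B + L * B + B with hK
  have hbound : ∀ᶠ m : ℕ in atTop, ∀ j : ℤ, ‖gcoef p j * corrTerm ν p w W m (τ m) j‖ ≤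
      K * ((1 + |(j : ℝ)|) * (p ^ ((j : ℝ) * (j + 1) / 2) * p ^ (-|(j : ℝ)|))) := by
    filter_upwards [lim1.eventually (gt_mem_nhds one_pos), lim2.eventually (gt_mem_nhds one_pos)]
      with m h1 h2 j
    rw [norm_mul, Real.norm_eq_abs, Real.norm_eq_abs, abs_gcoef hp0, corrTerm_eq]
    have e0 : |2 * (j : ℝ) * p ^ ((j : ℝ) * τ m) * extZ w (m + j)| ≤
        2 * |(j : ℝ)| * p ^ (-|(j : ℝ)|) * B := by
      rw [abs_mul, abs_mul, abs_mul, abs_two, abs_of_pos (by positivity : 0 < p ^ ((j : ℝ) * τ m))]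
      exact mul_le_mul (mul_le_mul_of_nonneg_left (rpow_mul_le hp0 hp1 (hτ0 m) (hτ1 m) j)
        (by positivity)) (abs_extZ_le hp0 hp1 hw _) (abs_nonneg _) (by positivity)
    have e1 := abs_mid_le hp0 hp1 hw ν m (hτ0 m) (hτ1 m) j
    have e2 := abs_last_le hp0 hp1 hw ν m j
    set P := p ^ (-|(j : ℝ)|) with hP
    have hP0 : 0 < P := by positivity
    set X := |(j : ℝ)| with hX
    have hX0 : 0 ≤ X := abs_nonneg _
    have e1' := e1.trans (mul_le_of_le_one_left (by positivity) h1.le)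
    have e2' := e2.trans (mul_le_of_le_one_left (by positivity) h2.le)
    have key := (abs_add_three _ _ _).trans (add_le_add (add_le_add e0 e1') e2')
    calc _ ≤ p ^ ((j : ℝ) * (j + 1) / 2) * (2 * X * P * B + X * L * P * B + B * P) := by gcongr
      _ ≤ p ^ ((j : ℝ) * (j + 1) / 2) * (K * ((1 + X) * P)) := by
        gcongr
        have : 0 ≤ L * B * P := by positivity
        have : 0 ≤ B * P := by positivity
        have : 0 ≤ B * X * P := by positivity
        rw [hK]; nlinarith
      _ = _ := by ring
  have hpt : ∀ j : ℤ, Tendsto (fun m : ℕ => gcoef p j * corrTerm ν p w W m (τ m) j) atTop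
      (nhds (gcoef p j * (2 * j * W))) := by
    intro j
    refine Tendsto.const_mul _ ?_
    simp only [corrTerm_eq]
    have t1 : Tendsto (fun m : ℕ => p ^ ((j : ℝ) * τ m)) atTop (nhds 1) := by
      have : Tendsto (fun m : ℕ => (j : ℝ) * τ m) atTop (nhds 0) := by
        simpa using hτz.const_mul (j : ℝ)
      simpa using (tendsto_const_nhds (x := p)).rpow this (Or.inl hp0.ne')
    have t2 : Tendsto (fun m : ℕ => extZ w (m + j)) atTop (nhds W) := by
      rw [tendsto_iff_norm_sub_tendsto_zero]
      refine squeeze_zero (g := fun m : ℕ => (C + |W|) * (p ^ m * p ^ (j : ℝ)))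
        (fun _ => norm_nonneg _) (fun m => ?_) ?_
      · have := abs_extZ_sub_le hp0 hp1 hw (m + j)
        push_cast at this
        rwa [Real.rpow_add hp0, Real.rpow_natCast] at this
      · simpa using (hpm.mul_const (p ^ (j : ℝ))).const_mul (C + |W|)
    have t3 : Tendsto (fun m : ℕ => (ν + 2 * m) * (p ^ ((j : ℝ) * τ m) - 1) * extZ w (m + j))
        atTop (nhds 0) := by
      refine squeeze_zero_norm (fun m => abs_mid_le hp0 hp1 hw ν m (hτ0 m) (hτ1 m) j) ?_
      simpa using lim1.mul_const _
    have t4 : Tendsto (fun m : ℕ => (ν + 2 * m) * (extZ w (m + j) - W)) atTop (nhds 0) := by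
      refine squeeze_zero_norm (fun m => abs_last_le hp0 hp1 hw ν m j) ?_
      simpa using lim2.mul_const _
    simpa using (((t1.const_mul (2 * (j : ℝ))).mul t2).add t3).add t4
  have hs := (summable_gauss_int hp0 hp1).mul_left K
  have main := tendsto_tsum_of_dominated_convergence hs hpt hbound
  have e : ∑' j : ℤ, gcoef p j * (2 * j * W) = W * thetaConst p := by
    rw [thetaConst, ← tsum_mul_left]
    exact tsum_congr fun j => by ring
  rw [e] at main
  refine main.congr' ?_
  filter_upwards [hbound] with m hm
  have s1 : Summable fun j => gcoef p j * corrTerm ν p w W m (τ m) j :=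
    Summable.of_norm_bounded hs hm
  have s2 : Summable fun j => gcoef p j * ((ν + 2 * m) * W) := (summable_gcoef hp0 hp1).mul_right _
  have : recentred ν p w m (τ m) = ∑' j : ℤ, (gcoef p j * corrTerm ν p w W m (τ m) j +
      gcoef p j * ((ν + 2 * m) * W)) :=
    tsum_congr fun j => by unfold corrTerm; ring
  rw [this, s1.tsum_add s2, tsum_mul_right, tsum_gcoef, zero_mul, add_zero]

/-- The `k`-th coefficient `(-1)^k p^{k(k+1)/2} w_k`. -/
noncomputable def coef (p : ℝ) (w : ℕ → ℝ) (k : ℕ) : ℝ :=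
  (-1 : ℝ) ^ k * p ^ ((k : ℝ) * (k + 1) / 2) * w k

/-- The series `∑ (ν + 2k) (-1)^k p^{k(k+1)/2} w_k x^k`; for `x = z²` it is, up to a nonzero factor,
the derivative of the q-Bessel function. -/
noncomputable def derivSeries (ν p : ℝ) (w : ℕ → ℝ) (x : ℝ) : ℝ :=
  ∑' k : ℕ, (ν + 2 * k) * coef p w k * x ^ k

theorem recentred_eq {p : ℝ} (hp0 : 0 < p) (ν : ℝ) (w : ℕ → ℝ) (m : ℕ) (t : ℝ) :
    recentred ν p w m t = (-1) ^ m * p ^ ((m : ℝ) * (m - 1) / 2 - m * t) *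
      derivSeries ν p w (p ^ (-(m : ℝ) + t)) := by
  set g : ℤ → ℝ := fun n => gcoef p (n - m) *
    ((ν + 2 * n) * p ^ (((n : ℝ) - m) * t) * extZ w n) with hg
  have h1 : recentred ν p w m t = ∑' j : ℤ, g (Equiv.addLeft (m : ℤ) j) := by
    refine tsum_congr fun j => ?_
    simp only [hg, Equiv.coe_addLeft, add_sub_cancel_left]
    push_cast
    rw [add_sub_cancel_left]
    ring
  have h2 : ∑' n : ℤ, g n = ∑' k : ℕ, g (k : ℤ) := by
    refine (Function.Injective.tsum_eq Nat.cast_injective fun n hn => ?_).symm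
    by_contra hneg
    apply hn
    have : ¬ 0 ≤ n := fun h => hneg ⟨n.toNat, Int.toNat_of_nonneg h⟩
    simp [hg, extZ, this]
  rw [h1, (Equiv.addLeft (m : ℤ)).tsum_eq g, h2, derivSeries, ← tsum_mul_left]
  refine tsum_congr fun k => ?_
  have e1 : ((-1 : ℝ)) ^ ((k : ℤ) - m) = (-1) ^ m * (-1) ^ k := by
    rw [zpow_sub₀ (by norm_num), zpow_natCast, zpow_natCast]
    rcases neg_one_pow_eq_or ℝ m with h | h <;> rw [h] <;> simp [div_neg]
  have e2 : (p ^ (-(m : ℝ) + t)) ^ k = p ^ ((-(m : ℝ) + t) * k) := by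
    rw [Real.rpow_mul hp0.le, Real.rpow_natCast]
  have e3 : p ^ ((((k : ℤ) - m : ℤ) : ℝ) * (((k : ℤ) - m : ℤ) + 1) / 2) * p ^ (((k : ℝ) - m) * t) =
      p ^ ((m : ℝ) * (m - 1) / 2 - m * t) * (p ^ ((k : ℝ) * (k + 1) / 2) *
        p ^ ((-(m : ℝ) + t) * k)) := by
    rw [← Real.rpow_add hp0, ← Real.rpow_add hp0, ← Real.rpow_add hp0]
    congr 1
    push_cast
    ring
  simp only [hg, gcoef, coef, extZ, e1, e2, Int.cast_natCast, Int.natCast_nonneg, if_true,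
    Int.toNat_natCast]
  linear_combination (-1) ^ m * (-1) ^ k * (ν + 2 * k) * w k * e3

theorem summable_coef_mul {p : ℝ} (hp0 : 0 < p) (hp1 : p < 1) {w : ℕ → ℝ} {B : ℝ}
    (hw : ∀ k, |w k| ≤ B) (R : ℝ) (hR : 0 ≤ R) :
    Summable fun k : ℕ => ((k : ℝ) + 1) * |coef p w k| * R ^ k := by
  refine Summable.of_nonneg_of_le (fun k => by positivity) (fun k => ?_)
    ((summable_gauss hp0 hp1 R hR).mul_left B)
  have h : |coef p w k| ≤ p ^ ((k : ℝ) * (k + 1) / 2) * B := by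
    rw [coef, abs_mul, abs_mul, abs_pow, abs_neg, abs_one, one_pow, one_mul,
      abs_of_pos (by positivity : 0 < p ^ ((k : ℝ) * (k + 1) / 2))]
    exact mul_le_mul_of_nonneg_left (hw k) (by positivity)
  calc _ ≤ ((k : ℝ) + 1) * (p ^ ((k : ℝ) * (k + 1) / 2) * B) * R ^ k := by gcongr
    _ = _ := by ring

theorem summable_lin_coef {p : ℝ} (hp0 : 0 < p) (hp1 : p < 1) {w : ℕ → ℝ} {B : ℝ}
    (hw : ∀ k, |w k| ≤ B) (α β x : ℝ) :
    Summable fun k : ℕ => (α + β * k) * coef p w k * x ^ k := by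
  refine Summable.of_norm_bounded
    ((summable_coef_mul hp0 hp1 hw |x| (abs_nonneg x)).mul_left (|α| + |β|)) fun k => ?_
  rw [norm_mul, norm_mul, norm_pow, Real.norm_eq_abs, Real.norm_eq_abs, Real.norm_eq_abs]
  have h : |α + β * k| ≤ (|α| + |β|) * (k + 1) := by
    have := abs_add_le α (β * k)
    rw [abs_mul, Nat.abs_cast] at this
    have h1 : 0 ≤ |α| * k := by positivity
    have h2 := abs_nonneg β
    linarith
  calc _ ≤ (|α| + |β|) * (k + 1) * |coef p w k| * |x| ^ k := by gcongr
    _ = _ := by ring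

theorem abs_wt_le {a p : ℝ} (ha0 : 0 ≤ a) (ha1 : a < 1) (hp0 : 0 < p) (hp1 : p < 1) :
    ∃ B, ∀ k, |wt a p k| ≤ B := by
  obtain ⟨W, C, hW, h⟩ := wt_limit ha0 ha1 hp0 hp1
  have hC : 0 ≤ C := by simpa using (abs_nonneg _).trans (h 0)
  refine ⟨C + |W|, fun k => ?_⟩
  simpa [extZ] using abs_extZ_le hp0 hp1 h (k : ℤ)

/-! ### Positivity of the theta constant

With `a = 0` the series is Euler's `E(x) = ∑ (-1)^k p^{k(k+1)/2} x^k / (p;p)_k = (px;p)_∞`, whose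
functional equation `E(x) = (1 - px) E(px)` determines `recentred` exactly. -/

/-- Euler's series `∑ (-1)^k p^{k(k+1)/2} x^k / (p;p)_k`. -/
noncomputable def euler (p x : ℝ) : ℝ := ∑' k : ℕ, coef p (wt 0 p) k * x ^ k

theorem coef_rec {p : ℝ} (hp0 : 0 < p) (hp1 : p < 1) (k : ℕ) :
    coef p (wt 0 p) (k + 1) * (1 - p ^ (k + 1)) = -p ^ (k + 1) * coef p (wt 0 p) k := by
  have h := wt_rec le_rfl one_pos hp0 hp1 k
  have e : p ^ (((k + 1 : ℕ) : ℝ) * ((k + 1 : ℕ) + 1) / 2) =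
      p ^ ((k : ℝ) * (k + 1) / 2) * p ^ (k + 1) := by
    rw [← Real.rpow_natCast, ← Real.rpow_add hp0]
    congr 1
    push_cast
    ring
  unfold coef
  rw [e, h]
  ring

theorem euler_rec {p : ℝ} (hp0 : 0 < p) (hp1 : p < 1) (x : ℝ) :
    euler p x = (1 - p * x) * euler p (p * x) := by
  obtain ⟨B, hB⟩ := abs_wt_le le_rfl one_pos hp0 hp1
  have hs : ∀ y : ℝ, Summable fun k : ℕ => coef p (wt 0 p) k * y ^ k := fun y => by
    simpa using summable_lin_coef hp0 hp1 hB 1 0 y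
  have h1 : euler p x - euler p (p * x) =
      ∑' k : ℕ, (coef p (wt 0 p) k * x ^ k - coef p (wt 0 p) k * (p * x) ^ k) :=
    ((hs x).tsum_sub (hs _)).symm
  rw [((hs x).sub (hs _)).tsum_eq_zero_add] at h1
  have h2 : ∑' k : ℕ, (coef p (wt 0 p) (k + 1) * x ^ (k + 1) -
      coef p (wt 0 p) (k + 1) * (p * x) ^ (k + 1)) = -(p * x) * euler p (p * x) := by
    rw [euler, ← tsum_mul_left]
    refine tsum_congr fun k => ?_
    rw [mul_pow, mul_pow]
    linear_combination x ^ (k + 1) * coef_rec hp0 hp1 k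
  rw [h2] at h1
  simp only [pow_zero, sub_self, zero_add] at h1
  linarith

theorem derivSeries_rec {p : ℝ} (hp0 : 0 < p) (hp1 : p < 1) (x : ℝ) :
    derivSeries 0 p (wt 0 p) x =
      (1 - p * x) * derivSeries 0 p (wt 0 p) (p * x) - 2 * (p * x) * euler p (p * x) := by
  obtain ⟨B, hB⟩ := abs_wt_le le_rfl one_pos hp0 hp1
  have hs : ∀ y : ℝ, Summable fun k : ℕ => (0 + 2 * k) * coef p (wt 0 p) k * y ^ k := fun y =>
    summable_lin_coef hp0 hp1 hB 0 2 y
  have hs' : ∀ y : ℝ, Summable fun k : ℕ => coef p (wt 0 p) k * y ^ k := fun y => by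
    simpa using summable_lin_coef hp0 hp1 hB 1 0 y
  have h1 : derivSeries 0 p (wt 0 p) x - derivSeries 0 p (wt 0 p) (p * x) =
      ∑' k : ℕ, ((0 + 2 * k) * coef p (wt 0 p) k * x ^ k -
        (0 + 2 * k) * coef p (wt 0 p) k * (p * x) ^ k) :=
    ((hs x).tsum_sub (hs _)).symm
  rw [((hs x).sub (hs _)).tsum_eq_zero_add] at h1
  have h2 : ∑' k : ℕ, ((0 + 2 * ((k + 1 : ℕ) : ℝ)) * coef p (wt 0 p) (k + 1) * x ^ (k + 1) -
      (0 + 2 * ((k + 1 : ℕ) : ℝ)) * coef p (wt 0 p) (k + 1) * (p * x) ^ (k + 1)) =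
      -(p * x) * (derivSeries 0 p (wt 0 p) (p * x) + 2 * euler p (p * x)) := by
    rw [euler, derivSeries, ← tsum_mul_left, ← (hs _).tsum_add ((hs' _).mul_left 2),
      ← tsum_mul_left]
    refine tsum_congr fun k => ?_
    rw [mul_pow, mul_pow]
    push_cast
    linear_combination (2 * k + 2) * x ^ (k + 1) * coef_rec hp0 hp1 k
  rw [h2] at h1
  simp only [pow_zero, sub_self, zero_add] at h1
  linarith

theorem euler_one_pos {p : ℝ} (hp0 : 0 < p) (hp1 : p < 1) : 0 < euler p 1 := by
  obtain ⟨B, hB⟩ := abs_wt_le le_rfl one_pos hp0 hp1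
  have hiter : ∀ n : ℕ, euler p 1 = qPoch p p n * euler p (p ^ n) := by
    intro n
    induction n with
    | zero => simp [qPoch]
    | succ n ih =>
      rw [ih, euler_rec hp0 hp1, qPoch_succ, pow_succ']
      ring
  have hlim : Tendsto (fun n : ℕ => euler p (p ^ n)) atTop (nhds (euler p 0)) := by
    refine tendsto_tsum_of_dominated_convergence
      (bound := fun k : ℕ => ((k : ℝ) + 1) * |coef p (wt 0 p) k| * 1 ^ k)
      (summable_coef_mul hp0 hp1 hB 1 zero_le_one) (fun k => ?_) (Eventually.of_forall fun n k => ?_)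
    · exact ((tendsto_pow_atTop_nhds_zero_of_lt_one hp0.le hp1).pow k).const_mul _
    · rw [norm_mul, Real.norm_eq_abs, norm_pow, norm_pow, Real.norm_of_nonneg hp0.le, one_pow,
        mul_one]
      have h1 : (p ^ n) ^ k ≤ 1 := pow_le_one₀ (by positivity) (pow_le_one₀ hp0.le hp1.le)
      have h2 := abs_nonneg (coef p (wt 0 p) k)
      have h3 : 0 ≤ (k : ℝ) * |coef p (wt 0 p) k| := by positivity
      nlinarith
  have h0 : euler p 0 = 1 := by
    rw [euler, tsum_eq_single 0 (fun k hk => by simp [hk])]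
    simp [coef, wt, qPoch]
  rw [h0] at hlim
  obtain ⟨n, hn⟩ := (hlim.eventually (lt_mem_nhds one_pos)).exists
  rw [hiter n]
  exact mul_pos (qPoch_pos hp0.le hp1 hp0 hp1 n) hn

theorem euler_zero_neg_pow {p : ℝ} (hp0 : 0 < p) (hp1 : p < 1) (m : ℕ) :
    euler p (p⁻¹ ^ (m + 1)) = 0 := by
  have hp := hp0.ne'
  induction m with
  | zero => rw [euler_rec hp0 hp1]; simp [hp]
  | succ m ih =>
    rw [euler_rec hp0 hp1, pow_succ' _ (m + 1), mul_inv_cancel_left₀ hp, ih, mul_zero]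

/-- Exact value of the recentred Euler series; this is Jacobi's identity in disguise, giving
`thetaConst p = 2 (p;p)_∞³`. -/
theorem recentred_euler {p : ℝ} (hp0 : 0 < p) (hp1 : p < 1) (m : ℕ) :
    recentred 0 p (wt 0 p) (m + 1) 0 = 2 * qPoch p p m * euler p 1 := by
  have hp := hp0.ne'
  have hx : ∀ m : ℕ, p ^ (-((m : ℕ) : ℝ) + 0) = p⁻¹ ^ m := fun m => by
    rw [add_zero, Real.rpow_neg hp0.le, Real.rpow_natCast, inv_pow]
  have hD : (-1) ^ (m + 1) * p ^ (((m + 1 : ℕ) : ℝ) * ((m + 1 : ℕ) - 1) / 2) *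
      derivSeries 0 p (wt 0 p) (p⁻¹ ^ (m + 1)) = 2 * qPoch p p m * euler p 1 := by
    induction m with
    | zero =>
      rw [derivSeries_rec hp0 hp1]
      simp [hp, qPoch]
    | succ m ih =>
      rw [derivSeries_rec hp0 hp1, pow_succ' p⁻¹ (m + 1), mul_inv_cancel_left₀ hp,
        euler_zero_neg_pow hp0 hp1, mul_zero, sub_zero, qPoch_succ]
      have e : p ^ (((m + 1 + 1 : ℕ) : ℝ) * ((m + 1 + 1 : ℕ) - 1) / 2) =
          p ^ (((m + 1 : ℕ) : ℝ) * ((m + 1 : ℕ) - 1) / 2) * p ^ (m + 1) := by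
        rw [← Real.rpow_natCast, ← Real.rpow_add hp0]
        congr 1
        push_cast
        ring
      have e2 : p ^ (m + 1) * p⁻¹ ^ (m + 1) = 1 := by rw [← mul_pow, mul_inv_cancel₀ hp, one_pow]
      rw [e, show 2 * (qPoch p p m * (1 - p * p ^ m)) * euler p 1 =
        (1 - p ^ (m + 1)) * (2 * qPoch p p m * euler p 1) by ring, ← ih]
      rw [pow_succ' (-1 : ℝ) (m + 1)]
      linear_combination (-1) ^ (m + 1) * p ^ (((m + 1 : ℕ) : ℝ) * ((m + 1 : ℕ) - 1) / 2) *
        derivSeries 0 p (wt 0 p) (p⁻¹ ^ (m + 1)) * e2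
  rw [recentred_eq hp0, hx, mul_zero, sub_zero, hD]

theorem thetaConst_pos {p : ℝ} (hp0 : 0 < p) (hp1 : p < 1) : 0 < thetaConst p := by
  obtain ⟨W, C, hW, hw⟩ := wt_limit le_rfl one_pos hp0 hp1
  have h1 := tendsto_recentred hp0 hp1 hw 0 (τ := fun _ => 0) (fun _ => le_rfl)
    (fun _ => zero_le_one) (by simp)
  have h2 := h1.comp (tendsto_add_atTop_nat 1)
  have h3 := ((qPoch_tendsto (a := p) hp0 hp1).const_mul 2).mul_const (euler p 1)
  have h4 : W * thetaConst p = 2 * qPochInf p p * euler p 1 :=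
    tendsto_nhds_unique h2 (h3.congr fun m => (recentred_euler hp0 hp1 m).symm)
  have h5 : 0 ≤ qPochInf p p :=
    ge_of_tendsto' (qPoch_tendsto hp0 hp1) fun k => (qPoch_pos hp0.le hp1 hp0 hp1 k).le
  have h6 := lt_of_le_of_ne h5 (qPochInf_ne_zero hp0.le hp1 hp0 hp1).symm
  have h7 := euler_one_pos hp0 hp1
  have h8 : 0 < W * thetaConst p := by rw [h4]; positivity
  exact pos_of_mul_pos_right h8 hW.le

/-! ### The derivative of the q-Bessel function -/

theorem qBessel_eq {q : ℝ} (hq0 : 0 < q) (ν z : ℝ) :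
    qBessel ν q z = z ^ ν * (qPochInf (q ^ (2 * (ν + 1))) (q ^ 2) / qPochInf (q ^ 2) (q ^ 2)) *
      ∑' k : ℕ, coef (q ^ 2) (wt (q ^ (2 * (ν + 1))) (q ^ 2)) k * z ^ (2 * k) := by
  unfold qBessel
  congr 1
  refine tsum_congr fun k => ?_
  have e : (q ^ 2) ^ ((k : ℝ) * (k + 1) / 2) = q ^ (k * (k + 1)) := by
    rw [← Real.rpow_natCast q 2, ← Real.rpow_mul hq0.le, ← Real.rpow_natCast]
    congr 1
    push_cast
    ring
  rw [coef, wt, e]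
  ring

theorem hasDerivAt_series {p : ℝ} (hp0 : 0 < p) (hp1 : p < 1) {w : ℕ → ℝ} {B : ℝ}
    (hw : ∀ k, |w k| ≤ B) {z : ℝ} (hz : 0 < z) :
    HasDerivAt (fun y : ℝ => ∑' k : ℕ, coef p w k * y ^ (2 * k))
      (∑' k : ℕ, coef p w k * ((2 * k : ℕ) * z ^ (2 * k - 1))) z := by
  set R := z + 1
  have hR : 1 ≤ R := by simp only [R]; linarith
  refine hasDerivAt_tsum_of_isPreconnected (t := Set.Ioo 0 R) (y₀ := z)
    (u := fun k : ℕ => 2 * (((k : ℝ) + 1) * |coef p w k| * (R ^ 2) ^ k))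
    ((summable_coef_mul hp0 hp1 hw (R ^ 2) (by positivity)).mul_left 2) isOpen_Ioo
    isPreconnected_Ioo (fun k y _ => (hasDerivAt_pow (2 * k) y).const_mul _) (fun k y hy => ?_)
    ⟨hz, by simp [R]⟩ ?_ ⟨hz, by simp [R]⟩
  · rw [norm_mul, norm_mul, norm_pow, Real.norm_of_nonneg hy.1.le, Real.norm_eq_abs, ← pow_mul,
      Real.norm_of_nonneg (by positivity)]
    have h1 : y ^ (2 * k - 1) ≤ R ^ (2 * k) :=
      (pow_le_pow_left₀ hy.1.le hy.2.le _).trans (pow_le_pow_right₀ hR (by omega))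
    push_cast
    calc _ ≤ |coef p w k| * (2 * ((k : ℝ) + 1) * R ^ (2 * k)) := by
          have : 0 ≤ y := hy.1.le
          gcongr
          linarith
      _ = _ := by ring
  · simpa [pow_mul] using summable_lin_coef hp0 hp1 hw 1 0 (z ^ 2)

theorem deriv_qBessel {q ν : ℝ} (hq0 : 0 < q) (hq1 : q < 1) (hν : -1 < ν) {z : ℝ} (hz : 0 < z) :
    deriv (qBessel ν q) z =
      (z ^ (ν - 1) * (qPochInf (q ^ (2 * (ν + 1))) (q ^ 2) / qPochInf (q ^ 2) (q ^ 2))) *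
        derivSeries ν (q ^ 2) (wt (q ^ (2 * (ν + 1))) (q ^ 2)) (z ^ 2) := by
  have hp0 : 0 < q ^ 2 := by positivity
  have hp1 : q ^ 2 < 1 := pow_lt_one₀ hq0.le hq1 (by norm_num)
  have ha0 : 0 ≤ q ^ (2 * (ν + 1)) := by positivity
  have ha1 : q ^ (2 * (ν + 1)) < 1 := Real.rpow_lt_one hq0.le hq1 (by linarith)
  obtain ⟨B, hB⟩ := abs_wt_le ha0 ha1 hp0 hp1
  rw [funext (qBessel_eq hq0 ν)]
  set w := wt (q ^ (2 * (ν + 1))) (q ^ 2)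
  set c := qPochInf (q ^ (2 * (ν + 1))) (q ^ 2) / qPochInf (q ^ 2) (q ^ 2)
  set p := q ^ 2
  have h := (((Real.hasDerivAt_rpow_const (p := ν) (Or.inl hz.ne')).mul_const c).mul
    (hasDerivAt_series hp0 hp1 hB hz)).deriv
  refine h.trans ?_
  have s1 : Summable fun k : ℕ => ν * (coef p w k * z ^ (2 * k)) := by
    refine (summable_lin_coef hp0 hp1 hB ν 0 (z ^ 2)).congr fun k => ?_
    rw [← pow_mul]; ring
  have e2 : ∀ k : ℕ, z * (coef p w k * ((2 * k : ℕ) * z ^ (2 * k - 1))) =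
      (0 + 2 * k) * coef p w k * (z ^ 2) ^ k := by
    intro k
    rw [← pow_mul]
    rcases Nat.eq_zero_or_pos k with rfl | hk
    · simp
    · have : z ^ (2 * k) = z * z ^ (2 * k - 1) := by
        rw [← pow_succ']; congr 1; omega
      rw [this]; push_cast; ring
  have s2 : Summable fun k : ℕ => z * (coef p w k * ((2 * k : ℕ) * z ^ (2 * k - 1))) := by
    simp only [e2]
    exact summable_lin_coef hp0 hp1 hB 0 2 (z ^ 2)
  have e3 : derivSeries ν p w (z ^ 2) = ν * ∑' k : ℕ, coef p w k * z ^ (2 * k) +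
      z * ∑' k : ℕ, coef p w k * ((2 * k : ℕ) * z ^ (2 * k - 1)) := by
    rw [← tsum_mul_left, ← tsum_mul_left, ← s1.tsum_add s2]
    refine tsum_congr fun k => ?_
    rw [e2, ← pow_mul]; ring
  have e4 : z ^ ν = z ^ (ν - 1) * z := by
    rw [← Real.rpow_add_one hz.ne', sub_add_cancel]
  rw [e3, e4]
  ring

/-- Uniform positivity in `t`: otherwise a sequence of bad values of `t` would contradict
`tendsto_recentred`. -/
theorem recentred_pos {p : ℝ} (hp0 : 0 < p) (hp1 : p < 1) {w : ℕ → ℝ} {W C : ℝ} (hW : 0 < W)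
    (hw : ∀ k, |w k - W| ≤ C * p ^ k) (ν : ℝ) (θ : ℕ → ℝ)
    (hθ : ∀ m, 1 ≤ m → 0 < θ m ∧ θ m < 1)
    (hlim : Tendsto (fun m : ℕ => (m : ℝ) * θ m) atTop (nhds 0)) :
    ∃ M : ℕ, ∀ m, M ≤ m → ∀ t, 0 < t → t < θ m → 0 < recentred ν p w m t := by
  classical
  let bad : ℕ → ℝ → Prop := fun m t => 0 < t ∧ t < θ m ∧ recentred ν p w m t ≤ 0
  let τ : ℕ → ℝ := fun m => if h : 1 ≤ m ∧ ∃ t, bad m t then h.2.choose else 0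
  have hτ : ∀ m, (h : 1 ≤ m ∧ ∃ t, bad m t) → bad m (τ m) := fun m h => by
    simp only [τ, dif_pos h]
    exact h.2.choose_spec
  have hτ' : ∀ m, ¬ (1 ≤ m ∧ ∃ t, bad m t) → τ m = 0 := fun m h => by simp only [τ, dif_neg h]
  have h0 : ∀ m, 0 ≤ τ m := fun m => by
    by_cases h : 1 ≤ m ∧ ∃ t, bad m t
    · exact (hτ m h).1.le
    · exact (hτ' m h).ge
  have h1 : ∀ m, τ m ≤ 1 := fun m => by
    by_cases h : 1 ≤ m ∧ ∃ t, bad m t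
    · exact ((hτ m h).2.1.trans (hθ m h.1).2).le
    · rw [hτ' m h]; exact zero_le_one
  have h2 : Tendsto (fun m : ℕ => (m : ℝ) * τ m) atTop (nhds 0) := by
    refine squeeze_zero' (Eventually.of_forall fun m => mul_nonneg m.cast_nonneg (h0 m)) ?_ hlim
    filter_upwards [eventually_ge_atTop 1] with m hm
    refine mul_le_mul_of_nonneg_left ?_ m.cast_nonneg
    by_cases h : 1 ≤ m ∧ ∃ t, bad m t
    · exact (hτ m h).2.1.le
    · rw [hτ' m h]; exact (hθ m hm).1.le
  have h3 := tendsto_recentred hp0 hp1 hw ν h0 h1 h2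
  obtain ⟨M, hM⟩ := eventually_atTop.1
    (h3.eventually (lt_mem_nhds (mul_pos hW (thetaConst_pos hp0 hp1))))
  refine ⟨max M 1, fun m hm t ht0 ht1 => ?_⟩
  by_contra hneg
  have hb : 1 ≤ m ∧ ∃ t, bad m t := ⟨(le_max_right _ _).trans hm, t, ht0, ht1, not_lt.1 hneg⟩
  exact absurd (hM m ((le_max_left _ _).trans hm)) (not_lt.2 (hτ m hb).2.2)

theorem stmt2 (q ν : ℝ) (hq0 : 0 < q) (hq1 : q < 1) (hν : -1 < ν)
    (θ : ℕ → ℝ) (hθ : ∀ m, 1 ≤ m → 0 < θ m ∧ θ m < 1)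
    (hlim : Tendsto (fun m : ℕ => (m : ℝ) * θ m) atTop (nhds 0)) :
    ∃ M : ℕ, ∀ m, M ≤ m →
      ∀ z₁ ∈ Set.Ioo (q ^ (-(m : ℝ) + θ m)) (q ^ (-(m : ℝ))),
      ∀ z₂ ∈ Set.Ioo (q ^ (-(m : ℝ) + θ m)) (q ^ (-(m : ℝ))),
        0 < deriv (qBessel ν q) z₁ * deriv (qBessel ν q) z₂ := by
  have hp0 : 0 < q ^ 2 := by positivity
  have hp1 : q ^ 2 < 1 := pow_lt_one₀ hq0.le hq1 (by norm_num)
  have ha0 : 0 ≤ q ^ (2 * (ν + 1)) := by positivity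
  have ha1 : q ^ (2 * (ν + 1)) < 1 := Real.rpow_lt_one hq0.le hq1 (by linarith)
  obtain ⟨W, C, hW, hw⟩ := wt_limit ha0 ha1 hp0 hp1
  obtain ⟨M, hM⟩ := recentred_pos hp0 hp1 hW hw ν θ hθ hlim
  refine ⟨M, fun m hm => ?_⟩
  -- On the interval the series has the sign `(-1)^m`.
  have hsign : ∀ z ∈ Set.Ioo (q ^ (-(m : ℝ) + θ m)) (q ^ (-(m : ℝ))), 0 < z ∧
      0 < (-1) ^ m * derivSeries ν (q ^ 2) (wt (q ^ (2 * (ν + 1))) (q ^ 2)) (z ^ 2) := by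
    intro z hz
    have hz0 : 0 < z := lt_trans (by positivity) hz.1
    refine ⟨hz0, ?_⟩
    have hzq : q ^ Real.logb q z = z := Real.rpow_logb hq0 hq1.ne hz0
    rw [← hzq] at hz
    have l1 := (Real.rpow_lt_rpow_left_iff_of_base_lt_one hq0 hq1).1 hz.1
    have l2 := (Real.rpow_lt_rpow_left_iff_of_base_lt_one hq0 hq1).1 hz.2
    have h := hM m hm (Real.logb q z + m) (by linarith) (by linarith)
    rw [recentred_eq hp0] at h
    have e : (q ^ 2) ^ (-(m : ℝ) + (Real.logb q z + m)) = z ^ 2 := by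
      rw [neg_add_cancel_comm_assoc, ← Real.rpow_natCast q 2, ← Real.rpow_mul hq0.le, mul_comm,
        Real.rpow_mul hq0.le, hzq, Real.rpow_natCast]
    rw [e, mul_right_comm] at h
    exact pos_of_mul_pos_left h (by positivity)
  intro z₁ h₁ z₂ h₂
  obtain ⟨p₁, s₁⟩ := hsign z₁ h₁
  obtain ⟨p₂, s₂⟩ := hsign z₂ h₂
  rw [deriv_qBessel hq0 hq1 hν p₁, deriv_qBessel hq0 hq1 hν p₂]
  have hc : qPochInf (q ^ (2 * (ν + 1))) (q ^ 2) / qPochInf (q ^ 2) (q ^ 2) ≠ 0 :=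
    div_ne_zero (qPochInf_ne_zero ha0 ha1 hp0 hp1) (qPochInf_ne_zero hp0.le hp1 hp0 hp1)
  generalize qPochInf (q ^ (2 * (ν + 1))) (q ^ 2) / qPochInf (q ^ 2) (q ^ 2) = c at *
  generalize derivSeries ν (q ^ 2) (wt (q ^ (2 * (ν + 1))) (q ^ 2)) (z₁ ^ 2) = F₁ at *
  generalize derivSeries ν (q ^ 2) (wt (q ^ (2 * (ν + 1))) (q ^ 2)) (z₂ ^ 2) = F₂ at *
  have hF : 0 < F₁ * F₂ := by
    have h := mul_pos s₁ s₂
    rwa [mul_mul_mul_comm, ← mul_pow, neg_mul_neg, one_mul, one_pow, one_mul] at h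
  have e : z₁ ^ (ν - 1) * c * F₁ * (z₂ ^ (ν - 1) * c * F₂) =
      z₁ ^ (ν - 1) * z₂ ^ (ν - 1) * c ^ 2 * (F₁ * F₂) := by ring
  rw [e]
  positivity
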